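/- Let β, r, n ∈ ℕ and 𝒞 ⊆ ℕ. Assume P ⊆ {n+1, n+2, …} is a finite set of prime numbers, each coprime to β. Then δ̲((βℤ + r) ∩ ⋂_{i=1}^n (F_𝒞 − i)) ≥ ∏_{p∈P} (1 − n/p) · δ̲((βℤ + r) ∩ ⋂_{i=1}^n (F_{𝒞∖M_P} − i)), where δ̲ denotes the lower logarithmic density. -/

import Mathlib

/-!
For `s > 1` let `ζ_s` be the probability measure on `ℕ` giving `n` mass `n ^ (-s) / ζ(s)`. If
`s' ≤ s`, then `ζ_{s'}` is the law of the product of a `ζ_s`-distributed integer with an independent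
one, because the Dirichlet quotient of `n ^ (-s')` by `n ^ (-s)` is nonnegative. Hence the mass of a
set stable under multiplication increases as `s` decreases to `1`. Applied to sets of multiples this
yields the Davenport-Erdős phenomenon: the multiples of `C` which are not multiples of an element of
`C` below `K` have small upper logarithmic density for large `K`, so `C` may be truncated.

For a finite set `D` none of whose elements is divisible by the prime `p`, the conditions
`m ≡ r mod β` and `m + i ∈ F_D` have a common period `N` coprime to `p`. Among the translates
`m + j * N` with `0 ≤ j < p`, each shift `i` excludes at most one through `p ∣ m + j * N + i`.
Logarithmic means are invariant under translation, so averaging over `j` bounds the cost of sieving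
by `p` by the factor `1 - n / p`. The primes of `P` are then treated one at a time.
-/

open Filter Set Topology MeasureTheory

open scoped Classical

noncomputable section

/-- The set of multiples `M_B ⊆ ℤ` of a set `B ⊆ ℕ`. -/
def multiplesZ (B : Set ℕ) : Set ℤ := {n : ℤ | ∃ b ∈ B, (b : ℤ) ∣ n}

/-- The `B`-free integers `F_B = ℤ ∖ M_B`. -/
def freeZ (B : Set ℕ) : Set ℤ := (multiplesZ B)ᶜ

/-- The logarithmically weighted averages `(1/log n) ∑_{k=1}^n 1_A(k)/k`. -/
def logWeight (A : Set ℤ) (n : ℕ) : ℝ :=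
  (Real.log n)⁻¹ * ∑ k ∈ Finset.Icc 1 n, A.indicator (fun m : ℤ => ((m : ℝ))⁻¹) (k : ℤ)

/-- The lower logarithmic density of a set `A ⊆ ℤ`. -/
def logDensLow (A : Set ℤ) : ℝ := liminf (logWeight A) atTop

/-- `A ⊆ ℤ` has logarithmic density `d`. -/
def HasLogDensity (A : Set ℤ) (d : ℝ) : Prop := Tendsto (logWeight A) atTop (𝓝 d)

/-- `B` is primitive: no element divides another one. -/
def Primitive (B : Set ℕ) : Prop := ∀ b ∈ B, ∀ b' ∈ B, b ∣ b' → b = b'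

/-- `B` is Behrend: its set of multiples has logarithmic density one. -/
def IsBehrend (B : Set ℕ) : Prop := logDensLow (multiplesZ B) = 1

/-- `B` is taut: removing any element strictly decreases the logarithmic density
of the set of multiples. -/
def IsTaut (B : Set ℕ) : Prop :=
  ∀ b ∈ B, logDensLow (multiplesZ (B \ {b})) < logDensLow (multiplesZ B)

/-- `B̃^(N)`: the elements of `B` having no prime factor `≤ N`. -/
def Btilde (B : Set ℕ) (N : ℕ) : Set ℕ := {b ∈ B | ∀ p : ℕ, p.Prime → p ∣ b → N < p}

/-- `B^(N)`: the elements of `B` all of whose prime factors are `≤ N`. -/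
def Bsmooth (B : Set ℕ) (N : ℕ) : Set ℕ := {b ∈ B | ∀ p : ℕ, p.Prime → p ∣ b → p ≤ N}

/-- The set of multiples of `P`, as a subset of `ℕ`. -/
def natMultiples (P : Set ℕ) : Set ℕ := {n : ℕ | ∃ p ∈ P, p ∣ n}

/-! ### The zeta distribution -/

/-- The arithmetic function `n ↦ n ^ (-s)`. -/
def powArith (s : ℝ) : ArithmeticFunction ℝ := toArithmeticFunction fun n ↦ (n : ℝ) ^ (-s)

lemma powArith_apply (s : ℝ) {n : ℕ} (hn : n ≠ 0) : powArith s n = (n : ℝ) ^ (-s) := by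
  simp [powArith, toArithmeticFunction, hn]

lemma powArith_nonneg (s : ℝ) (n : ℕ) : 0 ≤ powArith s n := by
  rcases eq_or_ne n 0 with rfl | hn
  · simp
  · rw [powArith_apply s hn]
    positivity

lemma isMultiplicative_powArith (s : ℝ) : (powArith s).IsMultiplicative := by
  refine ArithmeticFunction.IsMultiplicative.iff_ne_zero.mpr ⟨by simp [powArith_apply], ?_⟩
  intro m n hm hn _
  rw [powArith_apply s (mul_ne_zero hm hn), powArith_apply s hm, powArith_apply s hn, Nat.cast_mul,
    Real.mul_rpow m.cast_nonneg n.cast_nonneg]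

lemma powArith_pow (s : ℝ) {p : ℕ} (hp : p ≠ 0) (k : ℕ) :
    powArith s (p ^ k) = ((p : ℝ) ^ (-s)) ^ k := by
  rw [powArith_apply s (pow_ne_zero k hp), Nat.cast_pow, Real.rpow_pow_comm p.cast_nonneg]

/-- The Dirichlet quotient of `n ↦ n ^ (-s')` by `n ↦ n ^ (-s)`, whose Dirichlet series is
`ζ(· + s') / ζ(· + s)`. -/
def powArithQuotient (s s' : ℝ) : ArithmeticFunction ℝ :=
  (powArith s').pmul (ArithmeticFunction.prodPrimeFactors fun p ↦ 1 - (p : ℝ) ^ (s' - s))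

lemma powArithQuotient_nonneg {s s' : ℝ} (h : s' ≤ s) (n : ℕ) : 0 ≤ powArithQuotient s s' n := by
  rcases eq_or_ne n 0 with rfl | hn
  · simp
  rw [powArithQuotient, ArithmeticFunction.pmul_apply,
    ArithmeticFunction.prodPrimeFactors_apply hn]
  refine mul_nonneg (powArith_nonneg s' n) (Finset.prod_nonneg fun p hp ↦ sub_nonneg.mpr ?_)
  exact Real.rpow_le_one_of_one_le_of_nonpos
    (mod_cast (Nat.prime_of_mem_primeFactors hp).one_le) (sub_nonpos.mpr h)

lemma isMultiplicative_powArithQuotient (s s' : ℝ) : (powArithQuotient s s').IsMultiplicative :=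
  (isMultiplicative_powArith s').pmul (ArithmeticFunction.IsMultiplicative.prodPrimeFactors _)

lemma powArithQuotient_prime_pow_succ (s s' : ℝ) {p : ℕ} (hp : p.Prime) (k : ℕ) :
    powArithQuotient s s' (p ^ (k + 1)) =
      ((p : ℝ) ^ (-s')) ^ k * ((p : ℝ) ^ (-s') - (p : ℝ) ^ (-s)) := by
  have hp0 : (0 : ℝ) < p := mod_cast hp.pos
  have hsplit : (p : ℝ) ^ (-s) = (p : ℝ) ^ (-s') * (p : ℝ) ^ (s' - s) := by
    rw [← Real.rpow_add hp0]
    ring_nf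
  rw [powArithQuotient, ArithmeticFunction.pmul_apply, powArith_pow s' hp.ne_zero,
    ArithmeticFunction.prodPrimeFactors_apply (pow_ne_zero _ hp.ne_zero),
    Nat.primeFactors_prime_pow k.succ_ne_zero hp, Finset.prod_singleton, hsplit]
  ring

lemma powArith_mul_powArithQuotient (s s' : ℝ) :
    powArith s * powArithQuotient s s' = powArith s' := by
  have hq := isMultiplicative_powArithQuotient s s'
  rw [((isMultiplicative_powArith s).mul hq).eq_iff_eq_on_prime_powers _ _
    (isMultiplicative_powArith s')]
  intro p k hp
  have hterm (i : ℕ) (hi : i ∈ Finset.range k) :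
      powArith s (p ^ i) * powArithQuotient s s' (p ^ k / p ^ i) =
        ((p : ℝ) ^ (-s)) ^ i * ((p : ℝ) ^ (-s')) ^ (k - 1 - i) *
          ((p : ℝ) ^ (-s') - (p : ℝ) ^ (-s)) := by
    have hik : i < k := Finset.mem_range.mp hi
    rw [Nat.pow_div hik.le hp.pos, show k - i = k - 1 - i + 1 by omega,
      powArithQuotient_prime_pow_succ s s' hp, powArith_pow s hp.ne_zero, mul_assoc]
  rw [ArithmeticFunction.mul_apply,
    Nat.sum_divisorsAntidiagonal fun d e ↦ powArith s d * powArithQuotient s s' e,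
    Nat.sum_divisors_prime_pow hp, Finset.sum_range_succ, Finset.sum_congr rfl hterm,
    Nat.div_self (pow_pos hp.pos k), hq.map_one, powArith_pow s hp.ne_zero,
    powArith_pow s' hp.ne_zero, ← Finset.sum_mul]
  linear_combination -geom_sum₂_mul ((p : ℝ) ^ (-s)) ((p : ℝ) ^ (-s')) k

/-- The measure on `ℕ` whose density with respect to counting measure is the positive part of
`f`. -/
def arithMeasure (f : ArithmeticFunction ℝ) : Measure ℕ :=
  Measure.sum fun n ↦ ENNReal.ofReal (f n) • Measure.dirac n

instance instSFiniteArithMeasure (f : ArithmeticFunction ℝ) : SFinite (arithMeasure f) :=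
  inferInstanceAs (SFinite (Measure.sum _))

lemma arithMeasure_singleton (f : ArithmeticFunction ℝ) (n : ℕ) :
    arithMeasure f {n} = ENNReal.ofReal (f n) :=
  Measure.sum_smul_dirac_singleton

lemma preimage_mul_singleton_eq_divisorsAntidiagonal {m : ℕ} (hm : m ≠ 0) :
    (fun x : ℕ × ℕ ↦ x.1 * x.2) ⁻¹' {m} = m.divisorsAntidiagonal := by
  ext x
  simp [hm]

lemma mconv_arithMeasure_zero (f g : ArithmeticFunction ℝ) :
    (arithMeasure f ∗ₘ arithMeasure g) {0} = 0 := by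
  rw [Measure.mconv, Measure.map_apply measurable_mul (measurableSet_singleton 0)]
  have hsub : (fun x : ℕ × ℕ ↦ x.1 * x.2) ⁻¹' {0} ⊆ {0} ×ˢ univ ∪ univ ×ˢ {0} := by
    intro x hx
    simpa using hx
  refine measure_mono_null hsub (measure_union_null ?_ ?_) <;>
    simp [Measure.prod_prod, arithMeasure_singleton]

lemma arithMeasure_mul {f g : ArithmeticFunction ℝ} (hf : ∀ n, 0 ≤ f n) (hg : ∀ n, 0 ≤ g n) :
    arithMeasure (f * g) = arithMeasure f ∗ₘ arithMeasure g := by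
  refine Measure.ext_of_singleton fun m ↦ ?_
  rcases eq_or_ne m 0 with rfl | hm
  · rw [mconv_arithMeasure_zero, arithMeasure_singleton, ArithmeticFunction.map_zero,
      ENNReal.ofReal_zero]
  calc arithMeasure (f * g) {m}
      = ∑ x ∈ m.divisorsAntidiagonal, ENNReal.ofReal (f x.1 * g x.2) := by
        rw [arithMeasure_singleton, ArithmeticFunction.mul_apply,
          ENNReal.ofReal_sum_of_nonneg fun x _ ↦ mul_nonneg (hf x.1) (hg x.2)]
    _ = ∑ x ∈ m.divisorsAntidiagonal, ((arithMeasure f).prod (arithMeasure g)) {x} := by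
        refine Finset.sum_congr rfl fun x _ ↦ ?_
        rw [← Prod.mk.eta (p := x), ← singleton_prod_singleton, Measure.prod_prod,
          arithMeasure_singleton, arithMeasure_singleton, ENNReal.ofReal_mul (hf x.1)]
    _ = (arithMeasure f ∗ₘ arithMeasure g) {m} := by
        rw [sum_measure_singleton, Measure.mconv,
          Measure.map_apply measurable_mul (measurableSet_singleton m),
          preimage_mul_singleton_eq_divisorsAntidiagonal hm]

section Mconv

variable {G : Type*} [Monoid G] [MeasurableSpace G] [MeasurableMul₂ G] (μ κ : Measure G)
  [SFinite κ]

lemma mconv_univ : (μ ∗ₘ κ) univ = μ univ * κ univ := by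
  rw [Measure.mconv, Measure.map_apply measurable_mul MeasurableSet.univ, preimage_univ,
    ← univ_prod_univ, Measure.prod_prod]

lemma measure_mul_measure_univ_le_mconv {M : Set G} (hM : MeasurableSet M)
    (hmul : ∀ d ∈ M, ∀ e, d * e ∈ M) : μ M * κ univ ≤ (μ ∗ₘ κ) M := by
  rw [Measure.mconv, Measure.map_apply measurable_mul hM, ← Measure.prod_prod]
  exact measure_mono fun x hx ↦ hmul x.1 hx.1 x.2

end Mconv

lemma arithMeasure_univ {f : ArithmeticFunction ℝ} (hf : ∀ n, 0 ≤ f n) (hsum : Summable f) :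
    arithMeasure f univ = ENNReal.ofReal (∑' n, f n) := by
  rw [arithMeasure, Measure.sum_apply _ MeasurableSet.univ, ENNReal.ofReal_tsum_of_nonneg hf hsum]
  simp

lemma powArith_eq_one_div_rpow {s : ℝ} (hs : 1 < s) (n : ℕ) : powArith s n = 1 / (n : ℝ) ^ s := by
  rcases eq_or_ne n 0 with rfl | hn
  · simp [Real.zero_rpow (by linarith : s ≠ 0)]
  · rw [powArith_apply s hn, Real.rpow_neg n.cast_nonneg, one_div]

lemma summable_powArith {s : ℝ} (hs : 1 < s) : Summable (powArith s) := by
  rw [funext (powArith_eq_one_div_rpow hs)]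
  exact Real.summable_one_div_nat_rpow.mpr hs

lemma arithMeasure_powArith_univ {s : ℝ} (hs : 1 < s) :
    arithMeasure (powArith s) univ = ENNReal.ofReal (∑' n : ℕ, 1 / (n : ℝ) ^ s) := by
  rw [arithMeasure_univ (powArith_nonneg s) (summable_powArith hs),
    funext (powArith_eq_one_div_rpow hs)]

lemma isFiniteMeasure_arithMeasure_powArith {s : ℝ} (hs : 1 < s) :
    IsFiniteMeasure (arithMeasure (powArith s)) :=
  ⟨by rw [arithMeasure_powArith_univ hs]; exact ENNReal.ofReal_lt_top⟩

lemma arithMeasure_powArith_univ_ne_zero (s : ℝ) : arithMeasure (powArith s) univ ≠ 0 := by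
  intro h
  have h1 : arithMeasure (powArith s) {1} = 0 := measure_mono_null (subset_univ _) h
  simp [arithMeasure_singleton, powArith_apply] at h1

/-- The zeta distribution on `ℕ`, giving `n` mass `n ^ (-s) / ζ(s)`; a probability measure when
`1 < s`. -/
def zetaMeasure (s : ℝ) : Measure ℕ :=
  (arithMeasure (powArith s) univ)⁻¹ • arithMeasure (powArith s)

lemma isProbabilityMeasure_zetaMeasure {s : ℝ} (hs : 1 < s) :
    IsProbabilityMeasure (zetaMeasure s) := by
  have := isFiniteMeasure_arithMeasure_powArith hs
  have : NeZero (arithMeasure (powArith s)) :=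
    ⟨fun h ↦ arithMeasure_powArith_univ_ne_zero s (by rw [h]; rfl)⟩
  exact isProbabilityMeasureSMul

lemma real_arithMeasure_powArith {s : ℝ} (hs : 1 < s) (M : Set ℕ) :
    (arithMeasure (powArith s)).real M =
      (∑' n : ℕ, 1 / (n : ℝ) ^ s) * (zetaMeasure s).real M := by
  have := isFiniteMeasure_arithMeasure_powArith hs
  have hZ : (arithMeasure (powArith s)).real univ = ∑' n : ℕ, 1 / (n : ℝ) ^ s := by
    rw [measureReal_def, arithMeasure_powArith_univ hs,
      ENNReal.toReal_ofReal (tsum_nonneg fun n ↦ by positivity)]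
  have hZ0 : (arithMeasure (powArith s)).real univ ≠ 0 :=
    (measureReal_ne_zero_iff).mpr (arithMeasure_powArith_univ_ne_zero s)
  rw [← hZ, zetaMeasure, measureReal_ennreal_smul_apply, ENNReal.toReal_inv, ← measureReal_def,
    mul_inv_cancel_left₀ hZ0]

/-- A random integer with zeta distribution of exponent `s'` is the product of one of exponent `s`
with an independent factor. -/
lemma zetaMeasure_le_zetaMeasure {M : Set ℕ} (hmul : ∀ d ∈ M, ∀ e, d * e ∈ M) {s s' : ℝ}
    (hs' : 1 < s') (h : s' ≤ s) : zetaMeasure s M ≤ zetaMeasure s' M := by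
  set μ := arithMeasure (powArith s)
  set κ := arithMeasure (powArithQuotient s s')
  have hconv : arithMeasure (powArith s') = μ ∗ₘ κ := by
    rw [← powArith_mul_powArithQuotient s s',
      arithMeasure_mul (powArith_nonneg s) (powArithQuotient_nonneg h)]
  have hfin : (μ ∗ₘ κ) univ ≠ ⊤ :=
    hconv ▸ (isFiniteMeasure_arithMeasure_powArith hs').measure_univ_lt_top.ne
  have hne : (μ ∗ₘ κ) univ ≠ 0 := hconv ▸ arithMeasure_powArith_univ_ne_zero s'
  have hκ0 : κ univ ≠ 0 := right_ne_zero_of_mul (mconv_univ μ κ ▸ hne)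
  have hκ : κ univ ≠ ⊤ := by
    rintro htop
    rw [mconv_univ, htop, ENNReal.mul_top (arithMeasure_powArith_univ_ne_zero s)] at hfin
    exact hfin rfl
  calc zetaMeasure s M = μ M / μ univ := by
        rw [zetaMeasure, Measure.smul_apply, smul_eq_mul, mul_comm, div_eq_mul_inv]
    _ = μ M * κ univ / (μ univ * κ univ) := (ENNReal.mul_div_mul_right _ _ hκ0 hκ).symm
    _ ≤ (μ ∗ₘ κ) M / (μ ∗ₘ κ) univ := by
        rw [mconv_univ]
        gcongr
        exact measure_mul_measure_univ_le_mconv μ κ (.of_discrete) hmul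
    _ = zetaMeasure s' M := by
        rw [zetaMeasure, hconv, Measure.smul_apply, smul_eq_mul, mul_comm, div_eq_mul_inv]

lemma real_zetaMeasure_le_real_zetaMeasure {M : Set ℕ} (hmul : ∀ d ∈ M, ∀ e, d * e ∈ M)
    {s s' : ℝ} (hs' : 1 < s') (h : s' ≤ s) : (zetaMeasure s).real M ≤ (zetaMeasure s').real M :=
  have := isProbabilityMeasure_zetaMeasure hs'
  ENNReal.toReal_mono (measure_ne_top _ _) (zetaMeasure_le_zetaMeasure hmul hs' h)

lemma exists_eventually_real_zetaMeasure_iUnion_sdiff_le {M : ℕ → Set ℕ} (hM : Monotone M)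
    (hmul : ∀ K, ∀ d ∈ M K, ∀ e, d * e ∈ M K) {ε : ℝ} (hε : 0 < ε) :
    ∃ K, ∀ᶠ s in 𝓝[>] (1 : ℝ), (zetaMeasure s).real ((⋃ k, M k) \ M K) ≤ ε := by
  set U := ⋃ k, M k
  set V : Set ℝ := (fun s ↦ (zetaMeasure s).real U) '' Ioi 1
  have hV : BddAbove V := by
    refine ⟨1, forall_mem_image.mpr fun s hs ↦ ?_⟩
    have := isProbabilityMeasure_zetaMeasure hs
    exact measureReal_le_one
  obtain ⟨_, ⟨s₀, hs₀, rfl⟩, hlt⟩ :=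
    exists_lt_of_lt_csSup (s := V) (nonempty_Ioi.image _) (sub_lt_self (sSup V) hε)
  have := isProbabilityMeasure_zetaMeasure hs₀
  have hlim : Tendsto (fun K ↦ (zetaMeasure s₀).real (M K)) atTop (𝓝 ((zetaMeasure s₀).real U)) :=
    (ENNReal.tendsto_toReal (measure_ne_top _ _)).comp (tendsto_measure_iUnion_atTop hM)
  obtain ⟨K, hK⟩ := (hlim.eventually_const_lt hlt).exists
  refine ⟨K, ?_⟩
  filter_upwards [Ioc_mem_nhdsGT hs₀] with s ⟨hs, hss₀⟩
  have := isProbabilityMeasure_zetaMeasure hs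
  have hsup : (zetaMeasure s).real U ≤ sSup V := le_csSup hV (mem_image_of_mem _ hs)
  have hmono := real_zetaMeasure_le_real_zetaMeasure (hmul K) hs hss₀
  rw [measureReal_sdiff (subset_iUnion M K) .of_discrete]
  linarith

lemma sum_indicator_inv_le_real_arithMeasure (A : Set ℕ) {x : ℕ} (hx : 1 < x) :
    ∑ k ∈ Finset.Icc 1 x, A.indicator (fun k ↦ (k : ℝ)⁻¹) k ≤
      Real.exp 1 * (arithMeasure (powArith (1 + (Real.log x)⁻¹))).real A := by
  set s := 1 + (Real.log x)⁻¹ with hs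
  have hlog : 0 < Real.log x := Real.log_pos (mod_cast hx)
  have hs1 : 1 < s := lt_add_of_pos_right 1 (inv_pos.mpr hlog)
  have := isFiniteMeasure_arithMeasure_powArith hs1
  have hterm (k : ℕ) (hk : k ∈ Finset.Icc 1 x) :
      (k : ℝ)⁻¹ ≤ Real.exp 1 * (arithMeasure (powArith s)).real {k} := by
    obtain ⟨hk1, hkx⟩ := Finset.mem_Icc.mp hk
    have hk0 : (0 : ℝ) < k := mod_cast hk1
    have hroot : (k : ℝ) ^ (Real.log x)⁻¹ ≤ Real.exp 1 := by
      rw [Real.rpow_def_of_pos hk0, Real.exp_le_exp, ← div_eq_mul_inv, div_le_one hlog]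
      exact Real.log_le_log hk0 (mod_cast hkx)
    calc (k : ℝ)⁻¹ = (k : ℝ) ^ (Real.log x)⁻¹ * (k : ℝ) ^ (-s) := by
          rw [← Real.rpow_add hk0, ← Real.rpow_neg_one, hs]
          ring_nf
      _ ≤ Real.exp 1 * (k : ℝ) ^ (-s) := by gcongr
      _ = Real.exp 1 * (arithMeasure (powArith s)).real {k} := by
          rw [measureReal_def, arithMeasure_singleton, powArith_apply s (by omega),
            ENNReal.toReal_ofReal (by positivity)]
  calc ∑ k ∈ Finset.Icc 1 x, A.indicator (fun k ↦ (k : ℝ)⁻¹) k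
      = ∑ k ∈ Finset.Icc 1 x with k ∈ A, (k : ℝ)⁻¹ := by
        simp only [Finset.sum_filter, indicator_apply]
    _ ≤ ∑ k ∈ Finset.Icc 1 x with k ∈ A, Real.exp 1 * (arithMeasure (powArith s)).real {k} :=
        Finset.sum_le_sum fun k hk ↦ hterm k (Finset.mem_of_mem_filter k hk)
    _ = Real.exp 1 * (arithMeasure (powArith s)).real ↑{k ∈ Finset.Icc 1 x | k ∈ A} := by
        rw [← Finset.mul_sum, sum_measureReal_singleton]
    _ ≤ Real.exp 1 * (arithMeasure (powArith s)).real A := by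
        have hsub : (↑{k ∈ Finset.Icc 1 x | k ∈ A} : Set ℕ) ⊆ A :=
          fun k hk ↦ (Finset.mem_filter.mp hk).2
        exact mul_le_mul_of_nonneg_left (measureReal_mono hsub (measure_ne_top _ _))
          (Real.exp_pos 1).le

lemma tendsto_log_natCast_atTop : Tendsto (fun x : ℕ ↦ Real.log x) atTop atTop :=
  Real.tendsto_log_atTop.comp tendsto_natCast_atTop_atTop

lemma tendsto_one_add_inv_log_nhdsGT :
    Tendsto (fun x : ℕ ↦ 1 + (Real.log x)⁻¹) atTop (𝓝[>] 1) := by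
  refine tendsto_nhdsWithin_iff.mpr ⟨?_, ?_⟩
  · simpa using (tendsto_inv_atTop_zero.comp tendsto_log_natCast_atTop).const_add 1
  · filter_upwards [tendsto_log_natCast_atTop.eventually_gt_atTop 0] with x hx
    exact lt_add_of_pos_right 1 (inv_pos.mpr hx)

lemma eventually_logWeight_le_real_zetaMeasure :
    ∀ᶠ x : ℕ in atTop, ∀ A : Set ℤ, logWeight A x ≤
      2 * Real.exp 1 * (zetaMeasure (1 + (Real.log x)⁻¹)).real ((↑) ⁻¹' A) := by
  have hpole : ∀ᶠ s in 𝓝[>] (1 : ℝ), (s - 1) * ∑' n : ℕ, 1 / (n : ℝ) ^ s < 2 :=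
    tendsto_sub_mul_tsum_nat_rpow.eventually_lt_const one_lt_two
  filter_upwards [tendsto_one_add_inv_log_nhdsGT.eventually hpole, eventually_gt_atTop 1]
    with x hZ hx A
  have hlog : 0 < Real.log x := Real.log_pos (mod_cast hx)
  set s := 1 + (Real.log x)⁻¹ with hs
  set Z := ∑' n : ℕ, 1 / (n : ℝ) ^ s
  set A' : Set ℕ := (↑) ⁻¹' A
  rw [hs, add_sub_cancel_left] at hZ
  calc logWeight A x
      = (Real.log x)⁻¹ * ∑ k ∈ Finset.Icc 1 x, A'.indicator (fun k ↦ (k : ℝ)⁻¹) k := by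
        simp only [logWeight, A', indicator_apply, mem_preimage, Int.cast_natCast]
    _ ≤ (Real.log x)⁻¹ * (Real.exp 1 * (Z * (zetaMeasure s).real A')) := by
        rw [← real_arithMeasure_powArith (lt_add_of_pos_right 1 (inv_pos.mpr hlog))]
        gcongr
        exact sum_indicator_inv_le_real_arithMeasure A' hx
    _ = (Real.log x)⁻¹ * Z * (Real.exp 1 * (zetaMeasure s).real A') := by ring
    _ ≤ 2 * (Real.exp 1 * (zetaMeasure s).real A') := by gcongr
    _ = 2 * Real.exp 1 * (zetaMeasure s).real A' := by ring

/-! ### Logarithmic means -/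

/-- The logarithmic mean `(1 / log x) ∑_{k=1}^x f k / k`, as a linear functional of `f`; it extends
`logWeight` from indicators to functions. -/
def logMean (x : ℕ) : (ℤ → ℝ) →ₗ[ℝ] ℝ :=
  (Real.log x)⁻¹ • ∑ k ∈ Finset.Icc 1 x, (k : ℝ)⁻¹ • LinearMap.proj (k : ℤ)

lemma logMean_apply (x : ℕ) (f : ℤ → ℝ) :
    logMean x f = (Real.log x)⁻¹ * ∑ k ∈ Finset.Icc 1 x, (k : ℝ)⁻¹ * f k := by
  simp [logMean]

lemma logMean_mono (x : ℕ) : Monotone (logMean x) := by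
  intro f g hfg
  rw [logMean_apply, logMean_apply]
  have := Real.log_natCast_nonneg x
  gcongr with k
  exact hfg k

lemma logWeight_eq_logMean (A : Set ℤ) (x : ℕ) : logWeight A x = logMean x (A.indicator 1) := by
  simp [logWeight, logMean_apply, indicator_apply]

lemma logWeight_nonneg (A : Set ℤ) (x : ℕ) : 0 ≤ logWeight A x := by
  rw [logWeight_eq_logMean, ← map_zero (logMean x)]
  exact logMean_mono x (indicator_nonneg fun _ _ ↦ zero_le_one)

lemma logWeight_mono {A B : Set ℤ} (h : A ⊆ B) (x : ℕ) : logWeight A x ≤ logWeight B x := by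
  rw [logWeight_eq_logMean, logWeight_eq_logMean]
  exact logMean_mono x (indicator_le_indicator_of_subset h fun _ ↦ zero_le_one)

lemma eventually_logWeight_le (A : Set ℤ) : ∀ᶠ x in atTop, logWeight A x ≤ 2 * Real.exp 1 := by
  filter_upwards [eventually_logWeight_le_real_zetaMeasure,
    tendsto_one_add_inv_log_nhdsGT.eventually self_mem_nhdsWithin] with x hx hs
  have := isProbabilityMeasure_zetaMeasure hs
  exact (hx A).trans (mul_le_of_le_one_right (by positivity) measureReal_le_one)

lemma mul_div_add_one_le {c ε : ℝ} (hc : 0 ≤ c) (hε : 0 ≤ ε) : c * (ε / (c + 1)) ≤ ε := by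
  rw [mul_div_left_comm]
  exact mul_le_of_le_one_right hε (div_le_one_of_le₀ (by linarith) (by positivity))

lemma mul_logDensLow_le_of_eventually {A B : Set ℤ} {c : ℝ} (hc : 0 ≤ c)
    (h : ∀ ε > 0, ∀ᶠ x in atTop, c * logWeight A x ≤ logWeight B x + ε) :
    c * logDensLow A ≤ logDensLow B := by
  have hbelow (S : Set ℤ) : IsBoundedUnder (· ≥ ·) atTop (logWeight S) :=
    isBoundedUnder_of ⟨0, logWeight_nonneg S⟩
  have habove : IsCoboundedUnder (· ≥ ·) atTop (logWeight B) :=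
    IsBoundedUnder.isCoboundedUnder_ge ⟨_, eventually_map.mpr (eventually_logWeight_le B)⟩
  refine le_of_forall_pos_le_add fun ε hε ↦ ?_
  obtain ⟨δ, hδ, hcδ⟩ : ∃ δ > 0, c * δ ≤ ε / 2 :=
    ⟨ε / 2 / (c + 1), by positivity, mul_div_add_one_le hc (half_pos hε).le⟩
  have hA : ∀ᶠ x in atTop, logDensLow A - δ < logWeight A x :=
    eventually_lt_of_lt_liminf (sub_lt_self (logDensLow A) hδ) (hbelow A)
  refine sub_le_iff_le_add.mp (le_liminf_of_le habove ?_)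
  filter_upwards [h (ε / 2) (half_pos hε), hA] with x hx hAx
  have := mul_le_mul_of_nonneg_left hAx.le hc
  linarith

lemma abs_sum_shift_sub_div_le {f : ℤ → ℝ} {C : ℝ} (hf : ∀ m, |f m| ≤ C) (x : ℕ) :
    |∑ k ∈ Finset.Icc 1 x, (k : ℝ)⁻¹ * (f (k + 1) - f k)| ≤ 2 * C := by
  -- Summation by parts against the decreasing weights `1 / k`.
  have hparts : |∑ k ∈ Finset.Icc 1 x, (k : ℝ)⁻¹ * (f (k + 1) - f k)
      - ((x : ℝ) + 1)⁻¹ * f (x + 1) + f 1| ≤ C * (1 - ((x : ℝ) + 1)⁻¹) := by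
    induction x with
    | zero => simp
    | succ x ih =>
      have hdecr : ((x : ℝ) + 1 + 1)⁻¹ ≤ ((x : ℝ) + 1)⁻¹ := by
        gcongr
        linarith
      have hstep : |(((x : ℝ) + 1)⁻¹ - ((x : ℝ) + 1 + 1)⁻¹) * f (x + 1 + 1)| ≤
          (((x : ℝ) + 1)⁻¹ - ((x : ℝ) + 1 + 1)⁻¹) * C := by
        rw [abs_mul, abs_of_nonneg (sub_nonneg.mpr hdecr)]
        exact mul_le_mul_of_nonneg_left (hf _) (sub_nonneg.mpr hdecr)
      rw [Finset.sum_Icc_succ_top (by omega)]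
      push_cast
      rw [abs_le] at ih hstep ⊢
      constructor <;> linarith [ih.1, ih.2, hstep.1, hstep.2]
  have hlast : |((x : ℝ) + 1)⁻¹ * f (x + 1)| ≤ ((x : ℝ) + 1)⁻¹ * C := by
    rw [abs_mul, abs_of_nonneg (by positivity)]
    exact mul_le_mul_of_nonneg_left (hf _) (by positivity)
  have hfirst := hf 1
  rw [abs_le] at hparts hlast hfirst ⊢
  constructor <;> linarith [hparts.1, hparts.2, hlast.1, hlast.2, hfirst.1, hfirst.2]

lemma tendsto_logMean_shift_one_sub {f : ℤ → ℝ} {C : ℝ} (hf : ∀ m, |f m| ≤ C) :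
    Tendsto (fun x ↦ logMean x (fun m ↦ f (m + 1)) - logMean x f) atTop (𝓝 0) := by
  simp only [logMean_apply, ← mul_sub, ← Finset.sum_sub_distrib]
  exact (tendsto_inv_atTop_zero.comp tendsto_log_natCast_atTop).zero_mul_isBoundedUnder_le
    (isBoundedUnder_of ⟨2 * C, abs_sum_shift_sub_div_le hf⟩)

lemma tendsto_logMean_shift_sub {f : ℤ → ℝ} {C : ℝ} (hf : ∀ m, |f m| ≤ C) (i : ℤ) :
    Tendsto (fun x ↦ logMean x (fun m ↦ f (m + i)) - logMean x f) atTop (𝓝 0) := by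
  have hone (j : ℤ) := tendsto_logMean_shift_one_sub (f := fun m ↦ f (m + j)) fun m ↦ hf (m + j)
  induction i with
  | zero => simp
  | succ i ih =>
    convert (hone i).add ih using 2 with x
    · simp only [add_assoc, add_comm (1 : ℤ)]
      ring
    · simp
  | pred i ih =>
    convert ih.sub (hone (-i - 1)) using 2 with x
    · simp only [add_assoc, add_sub_cancel]
      ring
    · simp

lemma tendsto_logWeight_preimage_add_sub (A : Set ℤ) (i : ℤ) :
    Tendsto (fun x ↦ logWeight ((· + i) ⁻¹' A) x - logWeight A x) atTop (𝓝 0) := by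
  have hbound (m : ℤ) : |A.indicator (1 : ℤ → ℝ) m| ≤ 1 := by
    by_cases hm : m ∈ A <;> simp [hm]
  simp only [logWeight_eq_logMean]
  exact tendsto_logMean_shift_sub hbound i

/-! ### Sets of multiples and shifted free numbers -/

lemma natMultiples_mono {B B' : Set ℕ} (h : B ⊆ B') : natMultiples B ⊆ natMultiples B' :=
  fun _ ⟨b, hb, hbm⟩ ↦ ⟨b, h hb, hbm⟩

lemma natMultiples_iUnion {ι : Sort*} (B : ι → Set ℕ) :
    natMultiples (⋃ k, B k) = ⋃ k, natMultiples (B k) := by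
  ext m
  simp only [natMultiples, mem_iUnion, mem_ofPred_eq]
  tauto

lemma mul_mem_natMultiples {B : Set ℕ} {a : ℕ} (ha : a ∈ natMultiples B) (b : ℕ) :
    a * b ∈ natMultiples B :=
  ha.imp fun _ ⟨hc, hca⟩ ↦ ⟨hc, hca.mul_right b⟩

lemma preimage_natCast_multiplesZ (B : Set ℕ) :
    ((↑) : ℕ → ℤ) ⁻¹' multiplesZ B = natMultiples B := by
  ext m
  simp [multiplesZ, natMultiples, Int.natCast_dvd_natCast]

lemma natMultiples_union (P Q : Set ℕ) :
    natMultiples (P ∪ Q) = natMultiples P ∪ natMultiples Q := by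
  ext m
  simp only [natMultiples, mem_union, mem_ofPred_eq, or_and_right, exists_or]

lemma mem_freeZ {B : Set ℕ} {m : ℤ} : m ∈ freeZ B ↔ ∀ b ∈ B, ¬ (b : ℤ) ∣ m := by
  simp [freeZ, multiplesZ]

lemma multiplesZ_mono {B B' : Set ℕ} (h : B ⊆ B') : multiplesZ B ⊆ multiplesZ B' :=
  fun _ ⟨b, hb, hbm⟩ ↦ ⟨b, h hb, hbm⟩

lemma freeZ_anti {B B' : Set ℕ} (h : B ⊆ B') : freeZ B' ⊆ freeZ B :=
  compl_subset_compl.mpr (multiplesZ_mono h)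

lemma periodic_mem_freeZ {B : Set ℕ} {N : ℕ} (h : ∀ b ∈ B, b ∣ N) :
    Function.Periodic (· ∈ freeZ B) (N : ℤ) := by
  intro m
  have hdvd : ∀ b ∈ B, ((b : ℤ) ∣ m + N ↔ (b : ℤ) ∣ m) := fun b hb ↦
    dvd_add_left (Int.natCast_dvd_natCast.mpr (h b hb))
  simp only [mem_freeZ, eq_iff_iff]
  exact forall₂_congr fun b hb ↦ not_congr (hdvd b hb)

lemma freeZ_inter_freeZ_sdiff_natMultiples_subset (B P : Set ℕ) :
    freeZ P ∩ freeZ (B \ natMultiples P) ⊆ freeZ B := by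
  rintro m ⟨hP, hB⟩
  rw [mem_freeZ] at hP hB ⊢
  intro b hb hbm
  refine hB b ⟨hb, ?_⟩ hbm
  rintro ⟨p, hp, hpb⟩
  exact hP p hp ((Int.natCast_dvd_natCast.mpr hpb).trans hbm)

/-- The intersection `⋂_{i ∈ I} (F_B - i)` of translates of the `B`-free integers. -/
def shiftedFree (I : Finset ℤ) (B : Set ℕ) : Set ℤ := {m | ∀ i ∈ I, m + i ∈ freeZ B}

lemma shiftedFree_anti (I : Finset ℤ) {B B' : Set ℕ} (h : B ⊆ B') :
    shiftedFree I B' ⊆ shiftedFree I B :=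
  fun _ hm i hi ↦ freeZ_anti h (hm i hi)

lemma periodic_mem_shiftedFree (I : Finset ℤ) {B : Set ℕ} {N : ℕ} (h : ∀ b ∈ B, b ∣ N) :
    Function.Periodic (· ∈ shiftedFree I B) (N : ℤ) := by
  intro m
  refine propext (forall₂_congr fun i _ ↦ ?_)
  rw [add_right_comm]
  exact (periodic_mem_freeZ h (m + i)).to_iff

lemma shiftedFree_inter_shiftedFree_sdiff_natMultiples_subset (I : Finset ℤ) (B P : Set ℕ) :
    shiftedFree I P ∩ shiftedFree I (B \ natMultiples P) ⊆ shiftedFree I B :=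
  fun _ hm i hi ↦ freeZ_inter_freeZ_sdiff_natMultiples_subset B P ⟨hm.1 i hi, hm.2 i hi⟩

/-! ### Truncation and sieving -/

lemma exists_eventually_logWeight_multiplesZ_sdiff_le (B : Set ℕ) {ε : ℝ} (hε : 0 < ε) :
    ∃ K, ∀ᶠ x in atTop, logWeight (multiplesZ B \ multiplesZ (B ∩ Iic K)) x ≤ ε := by
  have hmono : Monotone fun K ↦ natMultiples (B ∩ Iic K) :=
    fun _ _ hKL ↦ natMultiples_mono (inter_subset_inter_right B (Iic_subset_Iic.mpr hKL))
  obtain ⟨K, hK⟩ := exists_eventually_real_zetaMeasure_iUnion_sdiff_le hmono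
    (fun _ _ ha b ↦ mul_mem_natMultiples ha b) (ε := ε / (2 * Real.exp 1)) (by positivity)
  rw [← natMultiples_iUnion, ← inter_iUnion, iUnion_Iic, inter_univ] at hK
  refine ⟨K, ?_⟩
  filter_upwards [eventually_logWeight_le_real_zetaMeasure,
    tendsto_one_add_inv_log_nhdsGT.eventually hK] with x hx htail
  refine (hx _).trans ?_
  rw [preimage_sdiff, preimage_natCast_multiplesZ, preimage_natCast_multiplesZ, mul_comm]
  exact (le_div_iff₀ (by positivity)).mp htail

lemma exists_eventually_logWeight_preimage_add_multiplesZ_sdiff_le (B : Set ℕ) {ε : ℝ}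
    (hε : 0 < ε) :
    ∃ K, ∀ i : ℤ, ∀ᶠ x in atTop,
      logWeight ((· + i) ⁻¹' (multiplesZ B \ multiplesZ (B ∩ Iic K))) x ≤ ε := by
  obtain ⟨K, hK⟩ := exists_eventually_logWeight_multiplesZ_sdiff_le B (half_pos hε)
  refine ⟨K, fun i ↦ ?_⟩
  have hshift := tendsto_logWeight_preimage_add_sub (multiplesZ B \ multiplesZ (B ∩ Iic K)) i
  filter_upwards [hK, hshift.eventually_le_const (half_pos hε)] with x hx hxi
  linarith

lemma indicator_inter_shiftedFree_le (S : Set ℤ) (I : Finset ℤ) (B B' : Set ℕ) :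
    (S ∩ shiftedFree I B').indicator (1 : ℤ → ℝ) ≤ (S ∩ shiftedFree I B).indicator 1 +
      ∑ i ∈ I, ((· + i) ⁻¹' (multiplesZ B \ multiplesZ B')).indicator 1 := by
  intro m
  have hnonneg (A : Set ℤ) : 0 ≤ A.indicator (1 : ℤ → ℝ) m :=
    indicator_nonneg (fun _ _ ↦ zero_le_one) m
  rw [Pi.add_apply, Finset.sum_apply]
  by_cases hm : m ∈ S ∩ shiftedFree I B'
  · rw [indicator_of_mem hm]
    by_cases hmB : m ∈ S ∩ shiftedFree I B
    · rw [indicator_of_mem hmB]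
      exact le_add_of_nonneg_right (Finset.sum_nonneg fun i _ ↦ hnonneg _)
    · obtain ⟨i, hi, hmi⟩ : ∃ i ∈ I, m + i ∉ freeZ B := by
        simpa [shiftedFree, hm.1] using hmB
      have hmem : m ∈ (· + i) ⁻¹' (multiplesZ B \ multiplesZ B') :=
        ⟨not_notMem.mp hmi, hm.2 i hi⟩
      refine le_add_of_nonneg_of_le (hnonneg _) ?_
      rw [← indicator_of_mem hmem 1]
      exact Finset.single_le_sum (fun j _ ↦ hnonneg ((· + j) ⁻¹' (multiplesZ B \ multiplesZ B'))) hi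
  · rw [indicator_of_notMem hm]
    exact add_nonneg (hnonneg _) (Finset.sum_nonneg fun i _ ↦ hnonneg _)

lemma exists_eventually_logWeight_inter_shiftedFree_le (S : Set ℤ) (I : Finset ℤ) (B : Set ℕ)
    {ε : ℝ} (hε : 0 < ε) :
    ∃ K, ∀ᶠ x in atTop, logWeight (S ∩ shiftedFree I (B ∩ Iic K)) x ≤
      logWeight (S ∩ shiftedFree I B) x + ε := by
  obtain ⟨K, hK⟩ := exists_eventually_logWeight_preimage_add_multiplesZ_sdiff_le B
    (ε := ε / (I.card + 1)) (by positivity)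
  refine ⟨K, ?_⟩
  filter_upwards [(Finset.eventually_all I).mpr fun i _ ↦ hK i] with x hx
  calc logWeight (S ∩ shiftedFree I (B ∩ Iic K)) x
      ≤ logWeight (S ∩ shiftedFree I B) x +
          ∑ i ∈ I, logWeight ((· + i) ⁻¹' (multiplesZ B \ multiplesZ (B ∩ Iic K))) x := by
        simp only [logWeight_eq_logMean, ← map_sum, ← map_add]
        exact logMean_mono x (indicator_inter_shiftedFree_le S I B (B ∩ Iic K))
    _ ≤ logWeight (S ∩ shiftedFree I B) x + I.card * (ε / (I.card + 1)) := by
        gcongr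
        rw [← nsmul_eq_mul]
        exact Finset.sum_le_card_nsmul I _ _ hx
    _ ≤ logWeight (S ∩ shiftedFree I B) x + ε := by
        gcongr
        exact mul_div_add_one_le (Nat.cast_nonneg _) hε.le

lemma card_filter_dvd_add_mul_le_one {p N : ℕ} (hpN : p.Coprime N) (m : ℤ) :
    ((Finset.range p).filter fun j : ℕ ↦ (p : ℤ) ∣ m + (j : ℤ) * N).card ≤ 1 := by
  refine Finset.card_le_one.mpr fun a ha b hb ↦ ?_
  rw [Finset.mem_filter, Finset.mem_range] at ha hb
  have hmul : (p : ℤ) ∣ ((b : ℤ) - a) * N := by simpa [sub_mul] using dvd_sub hb.2 ha.2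
  have hdvd : (p : ℤ) ∣ (b : ℤ) - a :=
    (Nat.isCoprime_iff_coprime.mpr hpN).dvd_of_dvd_mul_right hmul
  exact Nat.ModEq.eq_of_lt_of_lt (Nat.modEq_iff_dvd.mpr hdvd) ha.1 hb.1

lemma sub_card_le_card_filter_mem_shiftedFree {p N : ℕ} (hpN : p.Coprime N) (I : Finset ℤ)
    (m : ℤ) :
    (p : ℝ) - I.card ≤
      ((Finset.range p).filter fun j : ℕ ↦ m + (j : ℤ) * N ∈ shiftedFree I {p}).card := by
  have hbad :
      ((Finset.range p).filter fun j : ℕ ↦ m + (j : ℤ) * N ∉ shiftedFree I {p}).card ≤ I.card := by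
    have hsub : (Finset.range p).filter (fun j : ℕ ↦ m + (j : ℤ) * N ∉ shiftedFree I {p}) ⊆
        I.biUnion fun i ↦
          (Finset.range p).filter fun j : ℕ ↦ (p : ℤ) ∣ (m + i) + (j : ℤ) * N := by
      intro j hj
      simpa [shiftedFree, mem_freeZ, add_right_comm, and_left_comm] using hj
    calc _ ≤ _ := Finset.card_le_card hsub
      _ ≤ I.card * 1 := Finset.card_biUnion_le_card_mul I _ 1 fun i _ ↦
          card_filter_dvd_add_mul_le_one hpN (m + i)
      _ = I.card := mul_one _
  have hsplit := Finset.card_filter_add_card_filter_not (s := Finset.range p)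
    fun j : ℕ ↦ m + (j : ℤ) * N ∈ shiftedFree I {p}
  rw [Finset.card_range] at hsplit
  have hcard : p ≤ ((Finset.range p).filter
      fun j : ℕ ↦ m + (j : ℤ) * N ∈ shiftedFree I {p}).card + I.card := by omega
  exact sub_le_iff_le_add.mpr (mod_cast hcard)

lemma sub_card_mul_indicator_le_sum_indicator {p N : ℕ} (hpN : p.Coprime N) (I : Finset ℤ)
    {A : Set ℤ} (hA : Function.Periodic (· ∈ A) (N : ℤ)) (m : ℤ) :
    ((p : ℝ) - I.card) * A.indicator 1 m ≤
      ∑ j ∈ Finset.range p, (A ∩ shiftedFree I {p}).indicator 1 (m + (j : ℤ) * N) := by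
  have hmem (j : ℕ) : m + (j : ℤ) * N ∈ A ↔ m ∈ A := (hA.nat_mul j m).to_iff
  by_cases hm : m ∈ A
  · simpa [indicator_apply, hmem, hm] using sub_card_le_card_filter_mem_shiftedFree hpN I m
  · simp [hmem, hm]

lemma eventually_one_sub_card_div_mul_logWeight_le {p N : ℕ} (hp : 0 < p) (hpN : p.Coprime N)
    (I : Finset ℤ) {A : Set ℤ} (hA : Function.Periodic (· ∈ A) (N : ℤ)) {ε : ℝ} (hε : 0 < ε) :
    ∀ᶠ x in atTop, (1 - (I.card : ℝ) / p) * logWeight A x ≤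
      logWeight (A ∩ shiftedFree I {p}) x + ε := by
  have hp' : (0 : ℝ) < p := mod_cast hp
  set F : ℤ → ℝ := (A ∩ shiftedFree I {p}).indicator 1
  have hF (m : ℤ) : |F m| ≤ 1 := by
    simp only [F, indicator_apply]
    split <;> simp
  have hshift : Tendsto (fun x ↦ ∑ j ∈ Finset.range p,
      (logMean x (fun m ↦ F (m + (j : ℤ) * N)) - logMean x F)) atTop (𝓝 0) := by
    simpa using tendsto_finsetSum (Finset.range p) fun j _ ↦
      tendsto_logMean_shift_sub hF ((j : ℤ) * N)
  filter_upwards [hshift.eventually_le_const (mul_pos hp' hε)] with x hx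
  have havg : ((p : ℝ) - I.card) * logWeight A x ≤
      ∑ j ∈ Finset.range p, logMean x (fun m ↦ F (m + (j : ℤ) * N)) := by
    rw [logWeight_eq_logMean, ← smul_eq_mul, ← map_smul, ← map_sum]
    refine logMean_mono x fun m ↦ ?_
    simpa using sub_card_mul_indicator_le_sum_indicator hpN I hA m
  rw [Finset.sum_sub_distrib, Finset.sum_const, Finset.card_range, nsmul_eq_mul] at hx
  rw [logWeight_eq_logMean (A ∩ shiftedFree I {p}), one_sub_div hp'.ne', div_mul_eq_mul_div,
    div_le_iff₀' hp']
  linarith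

lemma exists_coprime_forall_dvd {p : ℕ} (hp : p.Prime) {D : Set ℕ} (hD : D.Finite)
    (hpD : ∀ d ∈ D, ¬ p ∣ d) : ∃ N, p.Coprime N ∧ ∀ d ∈ D, d ∣ N :=
  ⟨∏ d ∈ hD.toFinset, d,
    Nat.Coprime.prod_right fun d hd ↦
      hp.coprime_iff_not_dvd.mpr (hpD d (hD.mem_toFinset.mp hd)),
    fun _ hd ↦ Finset.dvd_prod_of_mem _ (hD.mem_toFinset.mpr hd)⟩

lemma one_sub_div_nonneg {a b : ℕ} (h : a ≤ b) : 0 ≤ 1 - (a : ℝ) / b :=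
  sub_nonneg.mpr (div_le_one_of_le₀ (mod_cast h) b.cast_nonneg)

lemma one_sub_card_div_mul_logDensLow_le {R : Set ℤ} {β : ℕ}
    (hR : Function.Periodic (· ∈ R) (β : ℤ)) (I : Finset ℤ) (C : Set ℕ) {p : ℕ} (hp : p.Prime)
    (hIp : I.card ≤ p) (hpβ : p.Coprime β) :
    (1 - (I.card : ℝ) / p) * logDensLow (R ∩ shiftedFree I (C \ natMultiples {p})) ≤
      logDensLow (R ∩ shiftedFree I C) := by
  set D := C \ natMultiples {p}
  have hc : 0 ≤ 1 - (I.card : ℝ) / p := one_sub_div_nonneg hIp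
  refine mul_logDensLow_le_of_eventually hc fun ε hε ↦ ?_
  obtain ⟨K, hK⟩ := exists_eventually_logWeight_inter_shiftedFree_le (R ∩ shiftedFree I {p}) I D
    (half_pos hε)
  obtain ⟨N, hpN, hDN⟩ := exists_coprime_forall_dvd hp ((finite_Iic K).inter_of_right D)
    fun d hd hpd ↦ hd.1.2 ⟨p, rfl, hpd⟩
  have hper : Function.Periodic (· ∈ R ∩ shiftedFree I (D ∩ Iic K)) ((β * N : ℕ) : ℤ) := by
    intro m
    have hRN : Function.Periodic (· ∈ R) ((β * N : ℕ) : ℤ) := by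
      simpa [mul_comm] using hR.nat_mul N
    have hSN := periodic_mem_shiftedFree I fun d hd ↦ (hDN d hd).mul_left β
    exact congrArg₂ And (hRN m) (hSN m)
  filter_upwards [hK, eventually_one_sub_card_div_mul_logWeight_le hp.pos
    (hpβ.mul_right hpN) I hper (half_pos hε)] with x htail hsieve
  calc (1 - (I.card : ℝ) / p) * logWeight (R ∩ shiftedFree I D) x
      ≤ (1 - (I.card : ℝ) / p) * logWeight (R ∩ shiftedFree I (D ∩ Iic K)) x := by
        gcongr
        exact logWeight_mono (inter_subset_inter_right R (shiftedFree_anti I inter_subset_left)) x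
    _ ≤ logWeight (R ∩ shiftedFree I {p} ∩ shiftedFree I (D ∩ Iic K)) x + ε / 2 := by
        rwa [inter_right_comm]
    _ ≤ logWeight (R ∩ shiftedFree I {p} ∩ shiftedFree I D) x + ε / 2 + ε / 2 := by gcongr
    _ ≤ logWeight (R ∩ shiftedFree I C) x + ε := by
        rw [add_assoc, add_halves, inter_assoc]
        gcongr
        exact logWeight_mono (inter_subset_inter_right R
          (shiftedFree_inter_shiftedFree_sdiff_natMultiples_subset I C {p})) x

theorem logDensLow_remove_large_primes_general {R : Set ℤ} {β : ℕ}
    (hR : Function.Periodic (· ∈ R) (β : ℤ)) (I : Finset ℤ) (C : Set ℕ) (P : Finset ℕ)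
    (hP : ∀ p ∈ P, p.Prime) (hIP : ∀ p ∈ P, I.card ≤ p) (hPβ : ∀ p ∈ P, p.Coprime β) :
    (∏ p ∈ P, (1 - (I.card : ℝ) / p)) * logDensLow (R ∩ shiftedFree I (C \ natMultiples ↑P)) ≤
      logDensLow (R ∩ shiftedFree I C) := by
  induction P using Finset.induction_on with
  | empty => simp [natMultiples]
  | insert p P hpP ih =>
    simp only [Finset.forall_mem_insert] at hP hIP hPβ
    have hstep := one_sub_card_div_mul_logDensLow_le hR I (C \ natMultiples ↑P) hP.1 hIP.1 hPβ.1
    rw [sdiff_sdiff, ← natMultiples_union, union_singleton, ← Finset.coe_insert] at hstep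
    have hprod : 0 ≤ ∏ q ∈ P, (1 - (I.card : ℝ) / q) := Finset.prod_nonneg fun q hq ↦
      one_sub_div_nonneg (hIP.2 q hq)
    calc _ = (∏ q ∈ P, (1 - (I.card : ℝ) / q)) * ((1 - (I.card : ℝ) / p) *
            logDensLow (R ∩ shiftedFree I (C \ natMultiples ↑(insert p P)))) := by
          rw [Finset.prod_insert hpP]
          ring
      _ ≤ (∏ q ∈ P, (1 - (I.card : ℝ) / q)) *
            logDensLow (R ∩ shiftedFree I (C \ natMultiples ↑P)) := by gcongr
      _ ≤ logDensLow (R ∩ shiftedFree I C) := ih hP.2 hIP.2 hPβ.2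

/-- Lower logarithmic density estimate: removing the multiples of finitely many large
primes `p ∈ P` coprime to `β` only costs a factor `∏_{p ∈ P} (1 − n/p)`. -/
theorem logDensLow_remove_large_primes (β r n : ℕ) (hβ : 0 < β) (hr : 0 < r) (hn : 0 < n)
    (C : Set ℕ) (P : Finset ℕ) (hP : ∀ p ∈ P, p.Prime) (hPn : ∀ p ∈ P, n < p)
    (hPβ : ∀ p ∈ P, Nat.Coprime p β) :
    logDensLow ({m : ℤ | ∃ k : ℤ, m = (β : ℤ) * k + r} ∩
        ⋂ i ∈ Finset.Icc 1 n, {m : ℤ | m + (i : ℤ) ∈ freeZ C}) ≥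
      (∏ p ∈ P, (1 - (n : ℝ) / p)) *
        logDensLow ({m : ℤ | ∃ k : ℤ, m = (β : ℤ) * k + r} ∩
          ⋂ i ∈ Finset.Icc 1 n, {m : ℤ | m + (i : ℤ) ∈ freeZ (C \ natMultiples ↑P)}) := by
  set R := {m : ℤ | ∃ k : ℤ, m = (β : ℤ) * k + r}
  have hR : Function.Periodic (· ∈ R) (β : ℤ) := fun m ↦ propext
    ⟨fun ⟨k, hk⟩ ↦ ⟨k - 1, by linarith⟩, fun ⟨k, hk⟩ ↦ ⟨k + 1, by linarith⟩⟩
  set I : Finset ℤ := (Finset.Icc 1 n).map Nat.castEmbedding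
  have hI : I.card = n := by simp [I]
  have hfree (B : Set ℕ) :
      ⋂ i ∈ Finset.Icc 1 n, {m : ℤ | m + (i : ℤ) ∈ freeZ B} = shiftedFree I B := by
    ext m
    simp [shiftedFree, I, -Finset.mem_map, Finset.forall_mem_map]
  rw [hfree, hfree, ← hI]
  exact logDensLow_remove_large_primes_general hR I C P hP
    (fun p hp ↦ hI.trans_le (hPn p hp).le) hPβ
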